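/- Let f = (f_0, f_1, f_2) be a holomorphic solution of the A_2^(1) system with parameters α on an open set U ⊂ ℂ with f_0 and f_1 nonvanishing, and suppose g_0 = f_0 − α_1/f_1 is also nonvanishing. Let g = (f_0 − α_1/f_1, f_1, f_2 + α_1/f_1) be the image of f under the Bäcklund transformation s_1, with parameters β = (α_0 + α_1, −α_1, α_2 + α_1). Define u_0 = 1/f_0, u_1 = f_0(α_1 − f_0 f_1), u_2 = f_0 + f_1 + f_2 − u_0 − u_1, and ũ_0 = 1/g_0, ũ_1 = g_0(β_1 − g_0 g_1), ũ_2 = g_0 + g_1 + g_2 − ũ_0 − ũ_1. Then, wherever u_1 ≠ 0, one has ũ_0 = u_0 − α_1/u_1, ũ_1 = u_1 and ũ_2 = u_2 + α_1/u_1. -/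

import Mathlib

/-!
Since `g₀ f₁ = f₀ f₁ − α₁`, one has the factorisation `u₁ = −f₀ f₁ g₀`. The same product is
`v₁`, because `β₁ − g₀ g₁ = −α₁ − (f₀ f₁ − α₁) = −f₀ f₁`. Substituting
`α₁ = f₁ (f₀ − g₀)` then gives `α₁ / u₁ = 1 / f₀ − 1 / g₀`, which is the formula for `v₀`.
The formula for `v₂` follows because `g₀ + g₁ + g₂ = f₀ + f₁ + f₂`.
The identities are pointwise and purely algebraic.
-/

/-- The Bäcklund transformation `s₁` of the `A₂⁽¹⁾` system acts on the
`u`-coordinates `u₀ = 1/f₀`, `u₁ = f₀(α₁ − f₀f₁)`, `u₂ = f₀+f₁+f₂ − u₀ − u₁`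
by `u₀ ↦ u₀ − α₁/u₁`, `u₁ ↦ u₁`, `u₂ ↦ u₂ + α₁/u₁` (wherever `u₁ ≠ 0`). -/
theorem s1_action_on_u_A2 (α : Fin 3 → ℂ) (U : Set ℂ) (hU : IsOpen U)
    (f g u v : Fin 3 → ℂ → ℂ) (β : Fin 3 → ℂ)
    (hf : ∀ i : Fin 3, ∀ t ∈ U,
      HasDerivAt (f i) (f i t * (f (i + 1) t - f (i + 2) t) + α i) t)
    (hf0 : ∀ t ∈ U, f 0 t ≠ 0)
    (hf1 : ∀ t ∈ U, f 1 t ≠ 0)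
    (hg0 : ∀ t ∈ U, g 0 t = f 0 t - α 1 / f 1 t)
    (hg0ne : ∀ t ∈ U, g 0 t ≠ 0)
    (hg1 : ∀ t ∈ U, g 1 t = f 1 t)
    (hg2 : ∀ t ∈ U, g 2 t = f 2 t + α 1 / f 1 t)
    (hβ : β = ![α 0 + α 1, -α 1, α 2 + α 1])
    (hu0 : ∀ t ∈ U, u 0 t = 1 / f 0 t)
    (hu1 : ∀ t ∈ U, u 1 t = f 0 t * (α 1 - f 0 t * f 1 t))
    (hu2 : ∀ t ∈ U, u 2 t = f 0 t + f 1 t + f 2 t - u 0 t - u 1 t)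
    (hv0 : ∀ t ∈ U, v 0 t = 1 / g 0 t)
    (hv1 : ∀ t ∈ U, v 1 t = g 0 t * (β 1 - g 0 t * g 1 t))
    (hv2 : ∀ t ∈ U, v 2 t = g 0 t + g 1 t + g 2 t - v 0 t - v 1 t) :
    ∀ t ∈ U, u 1 t ≠ 0 →
      v 0 t = u 0 t - α 1 / u 1 t ∧ v 1 t = u 1 t ∧
        v 2 t = u 2 t + α 1 / u 1 t := by
  intro t ht _
  have h0 := hf0 t ht
  have h1 := hf1 t ht
  have hg := hg0ne t ht
  have hα : α 1 = f 1 t * (f 0 t - g 0 t) := by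
    rw [hg0 t ht]
    field_simp
    ring
  have hu : u 1 t = -(f 0 t * f 1 t * g 0 t) := by
    rw [hu1 t ht, hα]
    ring
  have hβ1 : β 1 = -α 1 := by simp [hβ]
  have hv : v 1 t = u 1 t := by
    rw [hv1 t ht, hu, hβ1, hg1 t ht, hα]
    ring
  have hq : α 1 / u 1 t = 1 / f 0 t - 1 / g 0 t := by
    rw [hu, hα]
    field_simp
    ring
  have hv0' : v 0 t = u 0 t - α 1 / u 1 t := by
    rw [hv0 t ht, hu0 t ht, hq]
    ring
  refine ⟨hv0', hv, ?_⟩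
  rw [hv2 t ht, hu2 t ht, hv, hv0', hg1 t ht, hg2 t ht, hg0 t ht]
  ring
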